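/- Suppose D_n(𝒞) ≠ 0 for every 1 ≤ n ≤ d, and define H(t) := H_n(𝒞) for r(n−1)/2 ≤ t < rn/2, 1 ≤ n ≤ d. Then there exist functions A(t,z), B(t,z) on [0,L)×ℂ, continuous in t and entire in z, and complex numbers a_n(L−rj), b_n(L−rj) (1 ≤ n ≤ d, 0 ≤ j ≤ d−n), such that: (i) for r(n−1)/2 ≤ t < rn/2, A(t,z) = (1/2)·Σ_{j=0}^{d−n}[a_n(L−rj)e^{i(L−rj−t)z} + conj(a_n(L−rj))e^{−i(L−rj−t)z}] and B(t,z) = (1/2)·Σ_{j=0}^{d−n}[b_n(L−rj)e^{i(L−rj−t)z} + conj(b_n(L−rj))e^{−i(L−rj−t)z}]; (ii) on each open interval (r(n−1)/2, rn/2), −(d/dt)ᵗ(A(t,z),B(t,z)) = z·[[0,−1],[1,0]]·H(t)·ᵗ(A(t,z),B(t,z)) for every z ∈ ℂ; (iii) A(0,z) = (E_𝒞(z)+E_𝒞^♯(z))/2 and B(0,z) = (i/2)(E_𝒞(z)−E_𝒞^♯(z)); (iv) for every z ∈ ℂ, lim_{t→L}(A(t,z),B(t,z)) = (A(0,0), B(0,0)),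 i.e. the limit equals the values of A and B at t=0, z=0 and is independent of z. -/

import Mathlib

open Complex Matrix Filter Topology
open scoped ComplexOrder

noncomputable section

def Lv (d : ℕ) : ℤ := if Even d then d / 2 else d

def rv (d : ℕ) : ℤ := if Even d then 1 else 2

/-- The coefficient of `T^k` in `f_𝒞(T) = Σ_{j=0}^d C_{-(L-rj)} T^{d-j}` is `C_{L-rk}`. -/
def coeffC (d : ℕ) (C : ℤ → ℂ) : ℕ → ℂ := fun k => C (Lv d - rv d * k)

def SCM (a : ℕ → ℂ) (d n : ℕ) : Matrix (Fin n) (Fin n) ℂ :=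
  Matrix.of fun j k => if (j : ℕ) ≤ (k : ℕ) then a (d - ((k : ℕ) - (j : ℕ))) else 0

def SCN (a : ℕ → ℂ) (n : ℕ) : Matrix (Fin n) (Fin n) ℂ :=
  Matrix.of fun j k => if (j : ℕ) ≤ (k : ℕ) then a ((k : ℕ) - (j : ℕ)) else 0

def SCL (a : ℕ → ℂ) (d n : ℕ) (ε : ℂ) : Matrix (Fin n ⊕ Fin n) (Fin n ⊕ Fin n) ℂ :=
  Matrix.fromBlocks (SCM a d n)ᵀ (ε • (SCN a n)ᴴ) (ε • SCN a n)
    ((SCM a d n).map (starRingEnd ℂ))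

def SCD (d : ℕ) (C : ℤ → ℂ) (n : ℕ) : ℂ :=
  if n = 0 then 1 else (SCL (coeffC d C) d n 1).det

def symVec (n : ℕ) (z : ℕ → ℂ) : Fin n ⊕ Fin n → ℂ :=
  Sum.elim (fun i => z (i : ℕ)) (fun i => (starRingEnd ℂ) (z ((i : Fin n).rev : ℕ)))

def rhsVec (d n : ℕ) (C : ℤ → ℂ) : Fin n ⊕ Fin n → ℂ :=
  Sum.elim (fun i => if (i : ℕ) + 1 = n then 2 * (starRingEnd ℂ) (C (Lv d)) else 0)
    (fun i => if (i : ℕ) = 0 then 2 * C (Lv d) else 0)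

def Rmat (zp zm : ℕ → ℕ → ℂ) (k : ℕ) : Matrix (Fin 2) (Fin 2) ℝ :=
  !![(zp k 0).re, (zp k 0).im; -(zm k 0).im, (zm k 0).re]

def Rprod (zp zm : ℕ → ℕ → ℂ) (n : ℕ) : Matrix (Fin 2) (Fin 2) ℝ :=
  ((List.range n).map (fun i => Rmat zp zm (n - i))).prod

def Hmat (zp zm : ℕ → ℕ → ℂ) (n : ℕ) : Matrix (Fin 2) (Fin 2) ℝ :=
  (!![(0:ℝ), -1; 1, 0])⁻¹ * (Rprod zp zm n)⁻¹ * !![(0:ℝ), 1; -1, 0] * Rprod zp zm n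

/-- The exponential polynomial `E_𝒞(z) = Σ_{j=0}^d C_{L-rj} e^{i(L-rj)z}`. -/
def Ecal (d : ℕ) (C : ℤ → ℂ) : ℂ → ℂ := fun z =>
  ∑ j ∈ Finset.range (d + 1),
    C (Lv d - rv d * j) * Complex.exp (Complex.I * ((Lv d - rv d * j : ℤ) : ℂ) * z)

/-- `E^♯(z) = conj(E(conj z))`. -/
def sharp (E : ℂ → ℂ) : ℂ → ℂ := fun z => (starRingEnd ℂ) (E ((starRingEnd ℂ) z))

/-!
Write `P^♯(X) = X^N conj(P(1 / conj X))` for `P` of formal degree `N`. The matrix `L_n^+` is a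
resultant matrix: it reads off the extreme coefficients of `U f + V f^♯` for `deg U, deg V < n`, so
solving a linear system with `L_{n+1}^+` amounts to one step `S ↦ p S + conj(q) S^♯` of the
Schur-Cohn algorithm, which lowers the formal degree of `S` by one. Averaging the equations for
`L_{n+1}^±` shows that the coefficients `p` and `q` of the step are
`(z_{n+1}^+(1) ± z_{n+1}^-(1)) / 2`.

In terms of a complex row `γ`, multiplication by the matrix `R_{n+1}` from the right is
`γ ↦ p γ + q conj(γ)`. If `γ_n` denotes a row of `(R_n ⋯ R_1)⁻¹`, the exponential sums with
coefficients `γ_n S_n` therefore agree at the time `r n / 2`, where their frequencies are symmetric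
about the origin. The two rows give `A` and `B`. Differentiation in `t` multiplies `γ_n` by `-i`,
and the definition of `H_n` says that this is the action of the Hamiltonian on the pair of rows.
-/

section ConjReflect

open Polynomial ComplexConjugate

variable {R : Type*} [CommSemiring R] [StarRing R]

/-- The reciprocal `P^♯(X) = X^N · conj(P(1 / conj X))` of a polynomial `P` of formal degree `N`. -/
def conjReflect (N : ℕ) (P : R[X]) : R[X] := (P.reflect N).map (starRingEnd R)

lemma coeff_conjReflect {N k : ℕ} (hk : k ≤ N) (P : R[X]) :
    (conjReflect N P).coeff k = conj (P.coeff (N - k)) := by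
  simp [conjReflect, coeff_reflect, revAt_le hk]

lemma natDegree_conjReflect_le {N : ℕ} {P : R[X]} (hP : P.natDegree ≤ N) :
    (conjReflect N P).natDegree ≤ N :=
  natDegree_map_le.trans <| natDegree_reflect_le.trans (max_le le_rfl hP)

lemma conjReflect_conjReflect (N : ℕ) (P : R[X]) : conjReflect N (conjReflect N P) = P := by
  ext k
  simp [conjReflect, coeff_reflect]

lemma conjReflect_add (N : ℕ) (P Q : R[X]) :
    conjReflect N (P + Q) = conjReflect N P + conjReflect N Q := by
  simp [conjReflect, reflect_add]

lemma conjReflect_mul {M N : ℕ} {P Q : R[X]} (hP : P.natDegree ≤ M) (hQ : Q.natDegree ≤ N) :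
    conjReflect (M + N) (P * Q) = conjReflect M P * conjReflect N Q := by
  simp [conjReflect, reflect_mul P Q hP hQ]

lemma conjReflect_X_pow_mul (n : ℕ) {N : ℕ} {P : R[X]} (hP : P.natDegree ≤ N) :
    conjReflect (n + n + N) (X ^ n * P) = X ^ n * conjReflect N P := by
  rw [conjReflect_mul ((natDegree_X_pow_le n).trans (Nat.le_add_left n n)) hP]
  simp [conjReflect, reflect_monomial, revAt_le]

end ConjReflect

section SchurCohnMatrix

open Polynomial ComplexConjugate

lemma coeff_mul_eq_sum_rev {R : Type*} [CommSemiring R] {n : ℕ} {U : R[X]}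
    (hU : U.natDegree ≤ n) (P : R[X]) (e : ℕ) :
    (U * P).coeff e = ∑ k : Fin (n + 1),
      (if n - (k : ℕ) ≤ e then P.coeff (e - (n - (k : ℕ))) else 0) * U.coeff (n - k) := by
  conv_lhs => rw [U.as_sum_range_C_mul_X_pow' (Nat.lt_succ_of_le hU)]
  rw [Finset.sum_mul, finsetSum_coeff, ← Finset.sum_range_reflect, ← Fin.sum_univ_eq_sum_range]
  refine Finset.sum_congr rfl fun k _ => ?_
  rw [Nat.succ_sub_one, mul_assoc, coeff_C_mul, coeff_X_pow_mul', mul_comm]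

lemma SCM_transpose_mulVec_coeff {d n : ℕ} (hn : n ≤ d) {P U : ℂ[X]} (hP : P.natDegree ≤ d)
    (hU : U.natDegree ≤ n) :
    (SCM P.coeff d (n + 1))ᵀ *ᵥ (fun i : Fin (n + 1) => U.coeff (n - i)) =
      fun i : Fin (n + 1) => (U * P).coeff (d + n - i) := by
  ext i
  rw [coeff_mul_eq_sum_rev hU, mulVec_apply_eq_sum]
  refine Finset.sum_congr rfl fun k _ => ?_
  have hle : n - (k : ℕ) ≤ d + n - i := by omega
  simp only [transpose_apply, SCM, of_apply, if_pos hle]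
  split_ifs with hki
  · congr 2; omega
  · rw [coeff_eq_zero_of_natDegree_lt (p := P) (by omega)]

lemma SCN_mulVec_coeff {n : ℕ} (P : ℂ[X]) {U : ℂ[X]} (hU : U.natDegree ≤ n) :
    SCN P.coeff (n + 1) *ᵥ (fun i : Fin (n + 1) => U.coeff (n - i)) =
      fun i : Fin (n + 1) => (U * P).coeff (n - i) := by
  ext i
  rw [coeff_mul_eq_sum_rev hU, mulVec_apply_eq_sum]
  refine Finset.sum_congr rfl fun k _ => ?_
  have hiff : n - (k : ℕ) ≤ n - i ↔ (i : ℕ) ≤ k := by omega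
  simp only [SCN, of_apply, hiff]
  split_ifs with hik
  · congr 2; omega
  · rfl

lemma conjTranspose_SCN {d n : ℕ} (hn : n ≤ d) (P : ℂ[X]) :
    (SCN P.coeff (n + 1))ᴴ = (SCM (conjReflect d P).coeff d (n + 1))ᵀ := by
  ext i k
  simp only [conjTranspose_apply, transpose_apply, SCN, SCM, of_apply, apply_ite star, star_zero]
  rw [coeff_conjReflect (Nat.sub_le _ _), Nat.sub_sub_self (by omega)]
  rfl

lemma SCM_map_conj {d n : ℕ} (hn : n ≤ d) (P : ℂ[X]) :
    (SCM P.coeff d (n + 1)).map conj = SCN (conjReflect d P).coeff (n + 1) := by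
  ext i k
  simp only [map_apply, SCM, SCN, of_apply, apply_ite conj, map_zero]
  rw [coeff_conjReflect (by omega)]

/-- The matrix `L_{n+1}^+` is a resultant matrix: it computes the lowest and the highest `n + 1`
coefficients of the combinations `U * P + V * P^♯` with multipliers of degree at most `n`. -/
lemma SCL_mulVec_coeff {d n : ℕ} (hn : n ≤ d) {P U V : ℂ[X]} (hP : P.natDegree ≤ d)
    (hU : U.natDegree ≤ n) (hV : V.natDegree ≤ n) :
    SCL P.coeff d (n + 1) 1 *ᵥ
        Sum.elim (fun i : Fin (n + 1) => U.coeff (n - i)) (fun i : Fin (n + 1) => V.coeff (n - i)) =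
      Sum.elim (fun i : Fin (n + 1) => (U * P + V * conjReflect d P).coeff (d + n - i))
        (fun i : Fin (n + 1) => (U * P + V * conjReflect d P).coeff (n - i)) := by
  have hP' := natDegree_conjReflect_le hP
  rw [SCL, fromBlocks_mulVec, Sum.elim_comp_inl, Sum.elim_comp_inr, one_smul, one_smul,
    conjTranspose_SCN hn, SCM_map_conj hn, SCM_transpose_mulVec_coeff hn hP hU,
    SCM_transpose_mulVec_coeff hn hP' hV, SCN_mulVec_coeff P hU, SCN_mulVec_coeff _ hV]
  simp only [coeff_add]
  rfl

lemma SCL_congr {a b : ℕ → ℂ} {d n : ℕ} (h : ∀ k ≤ d, a k = b k) (hn : n ≤ d) (ε : ℂ) :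
    SCL a d (n + 1) ε = SCL b d (n + 1) ε := by
  have hM : SCM a d (n + 1) = SCM b d (n + 1) := by
    ext i k
    simp only [SCM, of_apply, h _ (Nat.sub_le _ _)]
  have hN : SCN a (n + 1) = SCN b (n + 1) := by
    ext i k
    simp only [SCN, of_apply, h ((k : ℕ) - i) (by omega)]
  rw [SCL, SCL, hM, hN]

lemma SCL_one_mulVec_half_add_sub {a : ℕ → ℂ} {d n : ℕ} {u u' v v' x y : Fin n → ℂ}
    (hp : SCL a d n 1 *ᵥ Sum.elim u v = -Sum.elim x y)
    (hm : SCL a d n (-1) *ᵥ Sum.elim u' v' = Sum.elim x y) :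
    SCL a d n 1 *ᵥ Sum.elim ((1 / 2 : ℂ) • (u + u')) ((1 / 2 : ℂ) • (v - v')) =
      Sum.elim (0 : Fin n → ℂ) (-y) := by
  simp only [SCL, fromBlocks_mulVec, Sum.elim_comp_inl, Sum.elim_comp_inr, one_smul, neg_smul,
    neg_mulVec, mulVec_smul, mulVec_add, mulVec_sub] at hp hm ⊢
  ext (i | i)
  · have hpi := congrFun hp (.inl i)
    have hmi := congrFun hm (.inl i)
    simp only [Sum.elim_inl, Pi.add_apply, Pi.sub_apply, Pi.neg_apply, Pi.smul_apply, smul_eq_mul,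
      Pi.zero_apply] at hpi hmi ⊢
    linear_combination (hpi + hmi) / 2
  · have hpi := congrFun hp (.inr i)
    have hmi := congrFun hm (.inr i)
    simp only [Sum.elim_inr, Pi.add_apply, Pi.sub_apply, Pi.neg_apply, Pi.smul_apply, smul_eq_mul]
      at hpi hmi ⊢
    linear_combination (hpi - hmi) / 2

end SchurCohnMatrix

section SchurReduct

open Polynomial ComplexConjugate

/-- `S` is an `n`-th Schur reduct of `f`, with cofactors `U` and `V`: a combination of `f` and `f^♯`
of formal degree `d` from which the factor `X ^ n` has been split off. The reality conditions
normalize the scaling of `S`. -/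
structure IsSchurReduct (f : ℂ[X]) (d n : ℕ) (S U V : ℂ[X]) : Prop where
  natDegree_le : S.natDegree ≤ d - n
  natDegree_left_le : U.natDegree ≤ n
  natDegree_right_le : V.natDegree ≤ n
  combination : U * f + V * conjReflect d f = X ^ n * S
  conj_left_coeff : conj (U.coeff n) = U.coeff n
  left_coeff_ne_zero : U.coeff n ≠ 0
  right_coeff_zero : V.coeff 0 = 0
  exists_coeff_zero : ∃ ρ : ℝ, ρ ≠ 0 ∧ S.coeff 0 = ρ * f.coeff 0

/-- The Schur transform `conj(S(0)) S - S_m S^♯` of a polynomial `S` of formal degree `m`, whose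
coefficient of degree `m` vanishes. -/
def schurTransform (m : ℕ) (S : ℂ[X]) : ℂ[X] :=
  C (conj (S.coeff 0)) * S - C (S.coeff m) * conjReflect m S

lemma schurTransform_coeff_self (m : ℕ) (S : ℂ[X]) : (schurTransform m S).coeff m = 0 := by
  simp [schurTransform, coeff_conjReflect, mul_comm]

lemma schurTransform_coeff_zero (m : ℕ) (S : ℂ[X]) :
    (schurTransform m S).coeff 0 = (normSq (S.coeff 0) - normSq (S.coeff m) : ℝ) := by
  simp [schurTransform, coeff_conjReflect, normSq_eq_conj_mul_self, mul_comm]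

lemma natDegree_linear_combination_le {R : Type*} [Semiring R] {N : ℕ} {P Q : R[X]}
    (hP : P.natDegree ≤ N) (hQ : Q.natDegree ≤ N) (a b : R) :
    (C a * P + C b * Q).natDegree ≤ N :=
  natDegree_add_le_of_degree_le ((natDegree_C_mul_le a P).trans hP)
    ((natDegree_C_mul_le b Q).trans hQ)

lemma natDegree_schurTransform_le {m : ℕ} {S : ℂ[X]} (hS : S.natDegree ≤ m) :
    (schurTransform m S).natDegree ≤ m := by
  rw [schurTransform, sub_eq_add_neg, ← neg_mul, ← C_neg]
  exact natDegree_linear_combination_le hS (natDegree_conjReflect_le hS) _ _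

lemma SCL_mulVec_of_combination {d n : ℕ} (hn : n ≤ d) {f U V T : ℂ[X]} (hf : f.natDegree ≤ d)
    (hU : U.natDegree ≤ n) (hV : V.natDegree ≤ n) (hT : T.natDegree ≤ d - n)
    (h : U * f + V * conjReflect d f = X ^ n * T) :
    SCL f.coeff d (n + 1) 1 *ᵥ
        Sum.elim (fun i : Fin (n + 1) => U.coeff (n - i)) (fun i : Fin (n + 1) => V.coeff (n - i)) =
      Sum.elim (Pi.single (Fin.last n) (T.coeff (d - n))) (Pi.single 0 (T.coeff 0)) := by
  rw [SCL_mulVec_coeff hn hf hU hV, h]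
  congr 1 <;> ext i <;> rw [coeff_X_pow_mul']
  · rw [if_pos (by omega)]
    obtain rfl | hi := eq_or_ne i (Fin.last n)
    · rw [Pi.single_eq_same, Fin.val_last]
      congr 1
      omega
    · have hin := Fin.val_lt_last hi
      rw [Pi.single_eq_of_ne hi, coeff_eq_zero_of_natDegree_lt (by omega)]
  · obtain rfl | hi := eq_or_ne i 0
    · simp
    · have hi0 := Fin.val_ne_zero_iff.mpr hi
      rw [Pi.single_eq_of_ne hi, if_neg (by omega)]

namespace IsSchurReduct

variable {f S U V : ℂ[X]} {d n : ℕ}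

lemma zero (hf : f.natDegree ≤ d) : IsSchurReduct f d 0 f 1 0 where
  natDegree_le := hf
  natDegree_left_le := natDegree_one.le
  natDegree_right_le := natDegree_zero.le
  combination := by simp
  conj_left_coeff := by simp
  left_coeff_ne_zero := by simp
  right_coeff_zero := coeff_zero 0
  exists_coeff_zero := ⟨1, one_ne_zero, by simp⟩

lemma coeff_zero_ne_zero (hS : IsSchurReduct f d n S U V) (hf₀ : f.coeff 0 ≠ 0) :
    S.coeff 0 ≠ 0 := by
  obtain ⟨ρ, hρ, hSρ⟩ := hS.exists_coeff_zero
  exact hSρ ▸ mul_ne_zero (ofReal_ne_zero.mpr hρ) hf₀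

lemma conjReflect_combination (hS : IsSchurReduct f d n S U V) (hf : f.natDegree ≤ d)
    (hn : n ≤ d) :
    conjReflect n V * f + conjReflect n U * conjReflect d f = X ^ n * conjReflect (d - n) S := by
  rw [← conjReflect_X_pow_mul n hS.natDegree_le, ← hS.combination,
    show n + n + (d - n) = n + d by omega, conjReflect_add,
    conjReflect_mul hS.natDegree_left_le hf,
    conjReflect_mul hS.natDegree_right_le (natDegree_conjReflect_le hf),
    conjReflect_conjReflect, add_comm]

lemma exists_SCL_mulVec (hS : IsSchurReduct f d n S U V) (hf : f.natDegree ≤ d) (hn : n ≤ d) :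
    ∃ x : Fin (n + 1) ⊕ Fin (n + 1) → ℂ,
      SCL f.coeff d (n + 1) 1 *ᵥ x = Sum.elim (0 : Fin (n + 1) → ℂ)
        (Pi.single 0 ((normSq (S.coeff 0) - normSq (S.coeff (d - n)) : ℝ) : ℂ)) ∧
      x (.inl 0) = conj (S.coeff 0) * U.coeff n ∧
      x (.inr (Fin.last n)) = -S.coeff (d - n) * U.coeff n := by
  set s := conj (S.coeff 0)
  set σ := S.coeff (d - n)
  have hcomb : (C s * U + C (-σ) * conjReflect n V) * f +
      (C s * V + C (-σ) * conjReflect n U) * conjReflect d f =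
        X ^ n * schurTransform (d - n) S := by
    rw [schurTransform, C_neg]
    linear_combination C s * hS.combination - C σ * hS.conjReflect_combination hf hn
  have hmul := SCL_mulVec_of_combination hn hf
    (natDegree_linear_combination_le hS.natDegree_left_le
      (natDegree_conjReflect_le hS.natDegree_right_le) _ _)
    (natDegree_linear_combination_le hS.natDegree_right_le
      (natDegree_conjReflect_le hS.natDegree_left_le) _ _)
    (natDegree_schurTransform_le hS.natDegree_le) hcomb
  rw [schurTransform_coeff_self, Pi.single_zero, schurTransform_coeff_zero] at hmul
  refine ⟨_, hmul, ?_, ?_⟩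
  · simp [coeff_conjReflect, hS.right_coeff_zero]
  · simp [coeff_conjReflect, hS.right_coeff_zero, hS.conj_left_coeff]

lemma normSq_coeff_ne (hS : IsSchurReduct f d n S U V) (hf : f.natDegree ≤ d) (hn : n ≤ d)
    (hf₀ : f.coeff 0 ≠ 0) (hdet : (SCL f.coeff d (n + 1) 1).det ≠ 0) :
    normSq (S.coeff 0) - normSq (S.coeff (d - n)) ≠ 0 := by
  intro h
  obtain ⟨x, hx, hx₀, -⟩ := hS.exists_SCL_mulVec hf hn
  rw [h, ofReal_zero, Pi.single_zero, Sum.elim_zero_zero] at hx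
  have hx_zero := eq_zero_of_mulVec_eq_zero hdet hx
  rw [hx_zero, Pi.zero_apply, eq_comm] at hx₀
  exact mul_ne_zero (star_ne_zero.mpr (hS.coeff_zero_ne_zero hf₀)) hS.left_coeff_ne_zero hx₀

lemma exists_reflection (hS : IsSchurReduct f d n S U V) (hf : f.natDegree ≤ d) (hn : n ≤ d)
    (hf₀ : f.coeff 0 ≠ 0) (hdet : (SCL f.coeff d (n + 1) 1).det ≠ 0) {γ : ℂ}
    {v : Fin (n + 1) ⊕ Fin (n + 1) → ℂ}
    (hv : SCL f.coeff d (n + 1) 1 *ᵥ v = Sum.elim (0 : Fin (n + 1) → ℂ) (Pi.single 0 γ)) :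
    ∃ c : ℂ, c * (normSq (S.coeff 0) - normSq (S.coeff (d - n)) : ℝ) = γ ∧
      v (.inl 0) = c * (conj (S.coeff 0) * U.coeff n) ∧
      v (.inr (Fin.last n)) = c * (-S.coeff (d - n) * U.coeff n) := by
  obtain ⟨x, hx, hx₀, hx_last⟩ := hS.exists_SCL_mulVec hf hn
  have hδ := ofReal_ne_zero.mpr (hS.normSq_coeff_ne hf hn hf₀ hdet)
  set δ : ℂ := ((normSq (S.coeff 0) - normSq (S.coeff (d - n)) : ℝ) : ℂ)
  have hsmul : (γ / δ) • Sum.elim (0 : Fin (n + 1) → ℂ) (Pi.single (0 : Fin (n + 1)) δ) =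
      Sum.elim (0 : Fin (n + 1) → ℂ) (Pi.single 0 γ) := by
    ext (i | i) <;> simp [Pi.single_apply, hδ]
  have hv_eq : v = (γ / δ) • x := by
    rw [← sub_eq_zero]
    refine eq_zero_of_mulVec_eq_zero hdet ?_
    rw [mulVec_sub, mulVec_smul, hv, hx, hsmul, sub_self]
  exact ⟨γ / δ, div_mul_cancel₀ _ hδ, by rw [← hx₀, hv_eq]; rfl, by rw [← hx_last, hv_eq]; rfl⟩

lemma normSq_reflection_ne (hS : IsSchurReduct f d n S U V) (hf : f.natDegree ≤ d) (hn : n ≤ d)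
    (hf₀ : f.coeff 0 ≠ 0) (hdet : (SCL f.coeff d (n + 1) 1).det ≠ 0) {γ : ℂ} (hγ : γ ≠ 0)
    {v : Fin (n + 1) ⊕ Fin (n + 1) → ℂ}
    (hv : SCL f.coeff d (n + 1) 1 *ᵥ v = Sum.elim (0 : Fin (n + 1) → ℂ) (Pi.single 0 γ)) :
    normSq (v (.inl 0)) ≠ normSq (v (.inr (Fin.last n))) := by
  have hδ := hS.normSq_coeff_ne hf hn hf₀ hdet
  obtain ⟨c, hc, hp, hr⟩ := hS.exists_reflection hf hn hf₀ hdet hv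
  have hc₀ : c ≠ 0 := by
    rintro rfl
    exact hγ (by rw [← hc, zero_mul])
  rw [← sub_ne_zero, hp, hr]
  have hfactor : normSq (c * (conj (S.coeff 0) * U.coeff n)) -
      normSq (c * (-S.coeff (d - n) * U.coeff n)) =
        normSq c * normSq (U.coeff n) * (normSq (S.coeff 0) - normSq (S.coeff (d - n))) := by
    simp only [normSq_mul, normSq_conj, normSq_neg]
    ring
  rw [hfactor]
  exact mul_ne_zero (mul_ne_zero (normSq_eq_zero.not.mpr hc₀)
    (normSq_eq_zero.not.mpr hS.left_coeff_ne_zero)) hδ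

lemma exists_reflection_left (hS : IsSchurReduct f d n S U V) (hf : f.natDegree ≤ d) (hn : n ≤ d)
    (hf₀ : f.coeff 0 ≠ 0) (hdet : (SCL f.coeff d (n + 1) 1).det ≠ 0) {κ : ℝ} (hκ : κ ≠ 0)
    {v : Fin (n + 1) ⊕ Fin (n + 1) → ℂ}
    (hv : SCL f.coeff d (n + 1) 1 *ᵥ v =
      Sum.elim (0 : Fin (n + 1) → ℂ) (Pi.single 0 (κ * f.coeff 0))) :
    ∃ x : ℝ, x ≠ 0 ∧ v (.inl 0) = x * U.coeff n := by
  obtain ⟨c, hc, hp, -⟩ := hS.exists_reflection hf hn hf₀ hdet hv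
  obtain ⟨ρ, hρ, hSρ⟩ := hS.exists_coeff_zero
  have hδ := hS.normSq_coeff_ne hf hn hf₀ hdet
  set δ := normSq (S.coeff 0) - normSq (S.coeff (d - n))
  refine ⟨κ * ρ * normSq (f.coeff 0) / δ,
    div_ne_zero (mul_ne_zero (mul_ne_zero hκ hρ) (normSq_eq_zero.not.mpr hf₀)) hδ, ?_⟩
  rw [hp, eq_div_of_mul_eq (ofReal_ne_zero.mpr hδ) hc, hSρ]
  simp only [map_mul, conj_ofReal, ofReal_div, ofReal_mul, normSq_eq_conj_mul_self]
  ring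

lemma succ (hS : IsSchurReduct f d n S U V) (hf : f.natDegree ≤ d) (hn : n ≤ d)
    (hf₀ : f.coeff 0 ≠ 0) (hdet : (SCL f.coeff d (n + 1) 1).det ≠ 0) {κ : ℝ} (hκ : κ ≠ 0)
    {v : Fin (n + 1) ⊕ Fin (n + 1) → ℂ}
    (hv : SCL f.coeff d (n + 1) 1 *ᵥ v =
      Sum.elim (0 : Fin (n + 1) → ℂ) (Pi.single 0 (κ * f.coeff 0))) :
    IsSchurReduct f d (n + 1)
      (C (v (.inl 0)) * S + C (v (.inr (Fin.last n))) * conjReflect (d - n) S)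
      (X * (C (v (.inl 0)) * U + C (v (.inr (Fin.last n))) * conjReflect n V))
      (X * (C (v (.inl 0)) * V + C (v (.inr (Fin.last n))) * conjReflect n U)) := by
  obtain ⟨x, hx, hpx⟩ := hS.exists_reflection_left hf hn hf₀ hdet hκ hv
  obtain ⟨c, hc, hp, hr⟩ := hS.exists_reflection hf hn hf₀ hdet hv
  obtain ⟨π, hπ⟩ := conj_eq_iff_real.mp hS.conj_left_coeff
  set p := v (.inl 0)
  set r := v (.inr (Fin.last n))
  have hSr := natDegree_conjReflect_le hS.natDegree_le
  have hUr := natDegree_conjReflect_le hS.natDegree_left_le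
  have hVr := natDegree_conjReflect_le hS.natDegree_right_le
  have hX {W : ℂ[X]} (hW : W.natDegree ≤ n) : (X * W).natDegree ≤ n + 1 := by
    rw [add_comm]
    exact natDegree_mul_le_of_le natDegree_X_le hW
  have htop : (C p * S + C r * conjReflect (d - n) S).coeff (d - n) = 0 := by
    simp only [coeff_add, coeff_C_mul, coeff_conjReflect le_rfl, Nat.sub_self, hp, hr]
    ring
  have hUV : (X * (C p * U + C r * conjReflect n V)).coeff (n + 1) = ((x * π * π : ℝ) : ℂ) := by
    simp [coeff_conjReflect, hS.right_coeff_zero, hpx, hπ, mul_assoc]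
  have hπ₀ : π ≠ 0 := ofReal_ne_zero.mp (hπ ▸ hS.left_coeff_ne_zero)
  refine ⟨?_, hX (natDegree_linear_combination_le hS.natDegree_left_le hVr p r),
    hX (natDegree_linear_combination_le hS.natDegree_right_le hUr p r), ?_, ?_, ?_,
    mul_coeff_zero _ _ |>.trans (by simp), κ * π, mul_ne_zero hκ hπ₀, ?_⟩
  · rw [← Nat.sub_sub]
    exact natDegree_le_pred (natDegree_linear_combination_le hS.natDegree_le hSr p r) htop
  · linear_combination C p * X * hS.combination + C r * X * hS.conjReflect_combination hf hn
  · rw [hUV, conj_ofReal]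
  · rw [hUV]
    exact ofReal_ne_zero.mpr (mul_ne_zero (mul_ne_zero hx hπ₀) hπ₀)
  · simp only [coeff_add, coeff_C_mul, coeff_conjReflect (Nat.zero_le _), Nat.sub_zero, hp, hr]
    simp only [ofReal_sub, normSq_eq_conj_mul_self] at hc
    rw [ofReal_mul, ← hπ]
    linear_combination U.coeff n * hc

end IsSchurReduct

end SchurReduct

section SchurSequence

open Polynomial ComplexConjugate

/-- The polynomial `f_𝒞`. -/
def symbolPoly (d : ℕ) (C : ℤ → ℂ) : ℂ[X] :=
  ∑ k ∈ Finset.range (d + 1), monomial k (coeffC d C k)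

lemma coeff_symbolPoly {d k : ℕ} (hk : k ≤ d) (C : ℤ → ℂ) :
    (symbolPoly d C).coeff k = coeffC d C k := by
  have hlt := Nat.lt_succ_of_le hk
  simp [symbolPoly, finsetSum_coeff, coeff_monomial, hlt]

lemma coeff_symbolPoly_zero (d : ℕ) (C : ℤ → ℂ) : (symbolPoly d C).coeff 0 = C (Lv d) := by
  simp [coeff_symbolPoly (Nat.zero_le d), coeffC]

lemma natDegree_symbolPoly_le (d : ℕ) (C : ℤ → ℂ) : (symbolPoly d C).natDegree ≤ d :=
  natDegree_sum_le_of_forall_le _ _ fun _ hk =>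
    (natDegree_monomial_le _).trans (Finset.mem_range_succ_iff.mp hk)

/-- The reflection coefficient `p_n` of the step from the `n`-th to the `(n + 1)`-st Schur reduct,
the half sum of the leading solution entries at size `n + 1`. -/
def reflectionSum (zp zm : ℕ → ℕ → ℂ) (n : ℕ) : ℂ := (zp (n + 1) 0 + zm (n + 1) 0) / 2

/-- The conjugate `q_n` of the second reflection coefficient of the step from the `n`-th to the
`(n + 1)`-st Schur reduct, the half difference of the leading solution entries at size `n + 1`. -/
def reflectionDiff (zp zm : ℕ → ℕ → ℂ) (n : ℕ) : ℂ := (zp (n + 1) 0 - zm (n + 1) 0) / 2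

/-- The iteration `S ↦ p_n S + conj(q_n) S^♯`, where `S` has formal degree `d - n`. -/
def schurSeq (p q : ℕ → ℂ) (d : ℕ) (f : ℂ[X]) : ℕ → ℂ[X]
  | 0 => f
  | n + 1 => C (p n) * schurSeq p q d f n +
      C (conj (q n)) * conjReflect (d - n) (schurSeq p q d f n)

lemma coeff_schurSeq_succ {p q : ℕ → ℂ} {d n j : ℕ} (hj : j ≤ d - n) (f : ℂ[X]) :
    (schurSeq p q d f (n + 1)).coeff j = p n * (schurSeq p q d f n).coeff j +
      conj (q n) * conj ((schurSeq p q d f n).coeff (d - n - j)) := by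
  rw [schurSeq, coeff_add, coeff_C_mul, coeff_C_mul, coeff_conjReflect hj]

lemma SCL_coeff_symbolPoly {d n : ℕ} (hn : n ≤ d) (C : ℤ → ℂ) (ε : ℂ) :
    SCL (symbolPoly d C).coeff d (n + 1) ε = SCL (coeffC d C) d (n + 1) ε :=
  SCL_congr (fun _ hk => coeff_symbolPoly hk C) hn ε

lemma det_SCL_symbolPoly_ne_zero {d n : ℕ} {C : ℤ → ℂ} (hn : n < d) (hD : SCD d C (n + 1) ≠ 0) :
    (SCL (symbolPoly d C).coeff d (n + 1) 1).det ≠ 0 := by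
  rwa [SCD, if_neg n.succ_ne_zero, ← SCL_coeff_symbolPoly hn.le] at hD

lemma exists_SCL_mulVec_reflection {d n : ℕ} (hn : n ≤ d) {C : ℤ → ℂ} {zp zm : ℕ → ℕ → ℂ}
    (hzp : SCL (coeffC d C) d (n + 1) 1 *ᵥ symVec (n + 1) (zp (n + 1)) = -rhsVec d (n + 1) C)
    (hzm : SCL (coeffC d C) d (n + 1) (-1) *ᵥ symVec (n + 1) (zm (n + 1)) = rhsVec d (n + 1) C) :
    ∃ v : Fin (n + 1) ⊕ Fin (n + 1) → ℂ,
      SCL (symbolPoly d C).coeff d (n + 1) 1 *ᵥ v = Sum.elim (0 : Fin (n + 1) → ℂ)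
        (Pi.single 0 ((-2 : ℝ) * (symbolPoly d C).coeff 0)) ∧
      v (.inl 0) = reflectionSum zp zm n ∧
      v (.inr (Fin.last n)) = conj (reflectionDiff zp zm n) := by
  have hv := SCL_one_mulVec_half_add_sub hzp hzm
  rw [← SCL_coeff_symbolPoly hn] at hv
  refine ⟨_, hv.trans ?_, ?_, ?_⟩
  · congr 1
    ext i
    obtain rfl | hi := eq_or_ne i 0
    · simp [coeff_symbolPoly_zero]
    · simp [hi]
  · simp only [reflectionSum, Sum.elim_inl, Pi.smul_apply, Pi.add_apply, smul_eq_mul,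
      Fin.coe_ofNat_eq_mod, Nat.zero_mod]
    ring
  · simp only [reflectionDiff, Sum.elim_inr, Pi.smul_apply, Pi.sub_apply, smul_eq_mul, Fin.val_rev,
      Fin.val_last, Nat.sub_self, map_div₀, map_sub, conj_ofNat]
    ring

section

variable {d : ℕ} {C : ℤ → ℂ} {zp zm : ℕ → ℕ → ℂ}

lemma exists_isSchurReduct_schurSeq (hC : C (Lv d) ≠ 0)
    (hD : ∀ n, 1 ≤ n → n ≤ d → SCD d C n ≠ 0)
    (hzp : ∀ n, 1 ≤ n → n ≤ d → SCL (coeffC d C) d n 1 *ᵥ symVec n (zp n) = -rhsVec d n C)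
    (hzm : ∀ n, 1 ≤ n → n ≤ d → SCL (coeffC d C) d n (-1) *ᵥ symVec n (zm n) = rhsVec d n C)
    {n : ℕ} (hn : n ≤ d) :
    ∃ U V, IsSchurReduct (symbolPoly d C) d n
      (schurSeq (reflectionSum zp zm) (reflectionDiff zp zm) d (symbolPoly d C) n) U V := by
  have hf := natDegree_symbolPoly_le d C
  rw [← coeff_symbolPoly_zero d C] at hC
  induction n with
  | zero => exact ⟨1, 0, .zero hf⟩
  | succ n ih =>
    obtain ⟨U, V, hS⟩ := ih (by omega)
    have hdet := det_SCL_symbolPoly_ne_zero hn (hD (n + 1) (by omega) hn)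
    obtain ⟨v, hv, hp, hq⟩ := exists_SCL_mulVec_reflection (by omega)
      (hzp (n + 1) (by omega) hn) (hzm (n + 1) (by omega) hn)
    rw [schurSeq, ← hp, ← hq]
    exact ⟨_, _, hS.succ hf (by omega) hC hdet (by norm_num) hv⟩

lemma coeff_schurSeq_succ_top (hC : C (Lv d) ≠ 0)
    (hD : ∀ n, 1 ≤ n → n ≤ d → SCD d C n ≠ 0)
    (hzp : ∀ n, 1 ≤ n → n ≤ d → SCL (coeffC d C) d n 1 *ᵥ symVec n (zp n) = -rhsVec d n C)
    (hzm : ∀ n, 1 ≤ n → n ≤ d → SCL (coeffC d C) d n (-1) *ᵥ symVec n (zm n) = rhsVec d n C)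
    {n : ℕ} (hn : n < d) :
    (schurSeq (reflectionSum zp zm) (reflectionDiff zp zm) d (symbolPoly d C) (n + 1)).coeff
      (d - n) = 0 := by
  obtain ⟨U, V, hS⟩ := exists_isSchurReduct_schurSeq hC hD hzp hzm hn
  exact coeff_eq_zero_of_natDegree_lt (hS.natDegree_le.trans_lt (by omega))

lemma normSq_reflectionSum_ne (hC : C (Lv d) ≠ 0)
    (hD : ∀ n, 1 ≤ n → n ≤ d → SCD d C n ≠ 0)
    (hzp : ∀ n, 1 ≤ n → n ≤ d → SCL (coeffC d C) d n 1 *ᵥ symVec n (zp n) = -rhsVec d n C)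
    (hzm : ∀ n, 1 ≤ n → n ≤ d → SCL (coeffC d C) d n (-1) *ᵥ symVec n (zm n) = rhsVec d n C)
    {n : ℕ} (hn : n < d) :
    normSq (reflectionSum zp zm n) ≠ normSq (reflectionDiff zp zm n) := by
  obtain ⟨U, V, hS⟩ := exists_isSchurReduct_schurSeq hC hD hzp hzm hn.le
  have hf := natDegree_symbolPoly_le d C
  rw [← coeff_symbolPoly_zero d C] at hC
  have hdet := det_SCL_symbolPoly_ne_zero hn (hD (n + 1) (by omega) hn)
  obtain ⟨v, hv, hp, hq⟩ := exists_SCL_mulVec_reflection hn.le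
    (hzp (n + 1) (by omega) hn) (hzm (n + 1) (by omega) hn)
  rw [← normSq_conj (reflectionDiff zp zm n), ← hp, ← hq]
  exact hS.normSq_reflection_ne hf hn.le hC hdet (mul_ne_zero (by norm_num) hC) hv

end

end SchurSequence

section MatrixRows

open ComplexConjugate

/-- The `i`-th row of a real `2 × 2` matrix, read as a complex number. -/
def rowComplex (K : Matrix (Fin 2) (Fin 2) ℝ) (i : Fin 2) : ℂ := ⟨K i 0, K i 1⟩

lemma rowComplex_mul_rotation (K : Matrix (Fin 2) (Fin 2) ℝ) (i : Fin 2) :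
    rowComplex (K * !![0, 1; -1, 0]) i = I * rowComplex K i := by
  apply Complex.ext <;> simp [rowComplex, mul_apply, Fin.sum_univ_two]

lemma rowComplex_mul_left (A K : Matrix (Fin 2) (Fin 2) ℝ) (i : Fin 2) :
    rowComplex (A * K) i = A i 0 * rowComplex K 0 + A i 1 * rowComplex K 1 := by
  apply Complex.ext <;> simp [rowComplex, mul_apply, Fin.sum_univ_two]

lemma rowComplex_mul_Rmat (K : Matrix (Fin 2) (Fin 2) ℝ) (zp zm : ℕ → ℕ → ℂ) (n : ℕ) (i : Fin 2) :
    rowComplex (K * Rmat zp zm (n + 1)) i = reflectionSum zp zm n * rowComplex K i +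
      reflectionDiff zp zm n * conj (rowComplex K i) := by
  apply Complex.ext <;>
    simp [rowComplex, Rmat, reflectionSum, reflectionDiff, mul_apply, Fin.sum_univ_two] <;> ring

lemma det_Rmat_succ (zp zm : ℕ → ℕ → ℂ) (n : ℕ) :
    (Rmat zp zm (n + 1)).det =
      normSq (reflectionSum zp zm n) - normSq (reflectionDiff zp zm n) := by
  simp only [Rmat, det_fin_two, of_apply, cons_val', cons_val_zero, cons_val_one, cons_val_fin_one,
    reflectionSum, reflectionDiff, map_div₀, normSq_ofNat, normSq_apply, add_re, add_im, sub_re,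
    sub_im]
  ring

lemma Rprod_succ (zp zm : ℕ → ℕ → ℂ) (n : ℕ) :
    Rprod zp zm (n + 1) = Rmat zp zm (n + 1) * Rprod zp zm n := by
  simp [Rprod, List.range_succ_eq_map, Function.comp_def]

lemma det_Rprod_ne_zero {zp zm : ℕ → ℕ → ℂ} {n : ℕ}
    (h : ∀ k < n, normSq (reflectionSum zp zm k) ≠ normSq (reflectionDiff zp zm k)) :
    (Rprod zp zm n).det ≠ 0 := by
  induction n with
  | zero => simp [Rprod]
  | succ n ih =>
    rw [Rprod_succ, det_mul, det_Rmat_succ]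
    exact mul_ne_zero (sub_ne_zero.mpr (h n n.lt_succ_self)) (ih fun k hk => h k (by omega))

lemma rowComplex_inv_Rprod {zp zm : ℕ → ℕ → ℂ} {n : ℕ}
    (h : normSq (reflectionSum zp zm n) ≠ normSq (reflectionDiff zp zm n)) (i : Fin 2) :
    rowComplex (Rprod zp zm n)⁻¹ i =
      reflectionSum zp zm n * rowComplex (Rprod zp zm (n + 1))⁻¹ i +
        reflectionDiff zp zm n * conj (rowComplex (Rprod zp zm (n + 1))⁻¹ i) := by
  have hunit : IsUnit (Rmat zp zm (n + 1)).det := by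
    rw [det_Rmat_succ]
    exact (sub_ne_zero.mpr h).isUnit
  rw [← rowComplex_mul_Rmat, Rprod_succ, Matrix.mul_inv_rev, nonsing_inv_mul_cancel_right _ _ hunit]

lemma mul_Hmat_mul_inv {zp zm : ℕ → ℕ → ℂ} {n : ℕ} (h : (Rprod zp zm n).det ≠ 0) :
    !![(0 : ℝ), -1; 1, 0] * Hmat zp zm n * (Rprod zp zm n)⁻¹ =
      (Rprod zp zm n)⁻¹ * !![(0 : ℝ), 1; -1, 0] := by
  have hJ : IsUnit (!![(0 : ℝ), -1; 1, 0]).det := by simp [det_fin_two]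
  rw [Hmat, Matrix.mul_assoc _⁻¹, Matrix.mul_assoc _⁻¹, mul_nonsing_inv_cancel_left _ _ hJ,
    mul_nonsing_inv_cancel_right _ _ h.isUnit]

lemma Hmat_one_rowComplex {zp zm : ℕ → ℕ → ℂ} {n : ℕ} (h : (Rprod zp zm n).det ≠ 0) :
    -I * rowComplex (Rprod zp zm n)⁻¹ 0 =
      (Hmat zp zm n 1 0 : ℝ) * rowComplex (Rprod zp zm n)⁻¹ 0 +
        (Hmat zp zm n 1 1 : ℝ) * rowComplex (Rprod zp zm n)⁻¹ 1 := by
  rw [neg_mul, ← rowComplex_mul_rotation, ← mul_Hmat_mul_inv h, rowComplex_mul_left]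
  simp only [mul_apply, Fin.sum_univ_two, of_apply, cons_val', cons_val_zero, cons_val_one,
    cons_val_fin_one, zero_mul, one_mul, neg_mul, zero_add, ofReal_neg]
  ring

lemma Hmat_zero_rowComplex {zp zm : ℕ → ℕ → ℂ} {n : ℕ} (h : (Rprod zp zm n).det ≠ 0) :
    -I * rowComplex (Rprod zp zm n)⁻¹ 1 =
      (-Hmat zp zm n 0 0 : ℝ) * rowComplex (Rprod zp zm n)⁻¹ 0 +
        (-Hmat zp zm n 0 1 : ℝ) * rowComplex (Rprod zp zm n)⁻¹ 1 := by
  rw [neg_mul, ← rowComplex_mul_rotation, ← mul_Hmat_mul_inv h, rowComplex_mul_left]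
  simp only [mul_apply, Fin.sum_univ_two, of_apply, cons_val', cons_val_zero, cons_val_one,
    cons_val_fin_one, zero_mul, one_mul, neg_mul, add_zero, ofReal_neg]
  ring

end MatrixRows

section RealExpSum

open ComplexConjugate

/-- The exponential sum with frequencies `ω j - t` and coefficients `c j`, `j ≤ m`, symmetrized so
as to be real for real `ω` and `z`. -/
def realExpSum (ω : ℕ → ℂ) (m : ℕ) (c : ℕ → ℂ) (t : ℝ) (z : ℂ) : ℂ :=
  (1 / 2) * ∑ j ∈ Finset.range (m + 1),
    (c j * exp (I * (ω j - t) * z) + conj (c j) * exp (-(I * (ω j - t) * z)))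

variable (ω : ℕ → ℂ) (m : ℕ) (c : ℕ → ℂ)

lemma continuous_realExpSum : Continuous (realExpSum ω m c) := by
  refine continuous_pi fun z => ?_
  unfold realExpSum
  fun_prop

lemma differentiable_realExpSum (t : ℝ) : Differentiable ℂ (realExpSum ω m c t) := by
  unfold realExpSum
  fun_prop

lemma hasDerivAt_realExpSum (t : ℝ) (z : ℂ) :
    HasDerivAt (fun s => realExpSum ω m c s z)
      (z * realExpSum ω m (fun j => -I * c j) t z) t := by
  have hphase (j : ℕ) : HasDerivAt (fun s : ℝ => I * (ω j - s) * z) (I * (-1) * z) t :=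
    (((hasDerivAt_id t).ofReal_comp.const_sub (ω j)).const_mul I).mul_const z
  have hsum := HasDerivAt.fun_sum fun j (_ : j ∈ Finset.range (m + 1)) =>
    ((hphase j).cexp.const_mul (c j)).add ((hphase j).neg.cexp.const_mul (conj (c j)))
  refine (hsum.const_mul (1 / 2 : ℂ)).congr_deriv ?_
  simp only [realExpSum, Finset.mul_sum]
  refine Finset.sum_congr rfl fun j _ => ?_
  rw [Pi.neg_apply, map_mul, map_neg, conj_I]
  ring

lemma realExpSum_linear_combination (a b : ℕ → ℂ) (x y : ℝ) (t : ℝ) (z : ℂ) :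
    realExpSum ω m (fun j => x * a j + y * b j) t z =
      x * realExpSum ω m a t z + y * realExpSum ω m b t z := by
  simp only [realExpSum, map_add, map_mul, conj_ofReal, Finset.mul_sum, ← Finset.sum_add_distrib]
  refine Finset.sum_congr rfl fun j _ => ?_
  ring

lemma realExpSum_apply_zero (t : ℝ) : realExpSum ω m c t 0 = realExpSum ω m c 0 0 := by
  simp [realExpSum]

variable {ω m c}

lemma realExpSum_succ_of_top_eq_zero (h : c (m + 1) = 0) (t : ℝ) (z : ℂ) :
    realExpSum ω (m + 1) c t z = realExpSum ω m c t z := by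
  simp [realExpSum, Finset.sum_range_succ _ (m + 1), h]

/-- If the frequencies are symmetric about `t`, the conjugate half of the sum is the other half with
the order of summation reversed. -/
lemma realExpSum_eq_of_symm {t : ℝ} {z : ℂ}
    (h : ∀ j ≤ m, (ω j + ω (m - j)) * z = 2 * t * z) :
    realExpSum ω m c t z = (1 / 2) * ∑ j ∈ Finset.range (m + 1),
      (c j + conj (c (m - j))) * exp (I * (ω j - t) * z) := by
  rw [realExpSum, Finset.sum_add_distrib, ← Finset.sum_range_reflect (fun j => conj (c j) * _),
    ← Finset.sum_add_distrib]
  congr 1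
  refine Finset.sum_congr rfl fun j hj => ?_
  have hjm := Finset.mem_range_succ_iff.mp hj
  have hphase : -(I * (ω (m - j) - t) * z) = I * (ω j - t) * z := by
    linear_combination -I * h j hjm
  rw [show m + 1 - 1 - j = m - j by omega, hphase, add_mul]

end RealExpSum

section Glue

variable {E : Type*} [AddCommGroup E]

/-- The function which follows `g n` on the interval `[τ (n - 1), τ n]`, for `n ≤ N`. It is written
as a sum of corrections, each switched on after its time `τ n`, so that regularity is inherited. -/
def glue (N : ℕ) (τ : ℕ → ℝ) (g : ℕ → ℝ → E) (t : ℝ) : E :=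
  g 0 t + ∑ n ∈ Finset.range N, (g (n + 1) (max t (τ n)) - g n (max t (τ n)))

lemma glue_eq {N k : ℕ} {τ : ℕ → ℝ} {g : ℕ → ℝ → E} {t : ℝ}
    (hmatch : ∀ n < N, g n (τ n) = g (n + 1) (τ n)) (hk : k ≤ N) (hlo : ∀ n < k, τ n ≤ t)
    (hhi : ∀ n, k ≤ n → n < N → t ≤ τ n) : glue N τ g t = g k t := by
  have hbefore : ∀ n ∈ Finset.range k, g (n + 1) (max t (τ n)) - g n (max t (τ n)) =
      g (n + 1) t - g n t := fun n hn => by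
    rw [max_eq_left (hlo n (Finset.mem_range.mp hn))]
  have hafter : ∀ n ∈ Finset.range N, n ∉ Finset.range k →
      g (n + 1) (max t (τ n)) - g n (max t (τ n)) = 0 := fun n hn hnk => by
    rw [Finset.mem_range] at hn hnk
    rw [max_eq_right (hhi n (not_lt.mp hnk) hn), hmatch n hn, sub_self]
  rw [glue, ← Finset.sum_subset (Finset.range_mono hk) hafter, Finset.sum_congr rfl hbefore,
    Finset.sum_range_sub (fun n => g n t), add_sub_cancel]

lemma continuous_glue [TopologicalSpace E] [IsTopologicalAddGroup E] {g : ℕ → ℝ → E}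
    (hg : ∀ n, Continuous (g n)) (N : ℕ) (τ : ℕ → ℝ) : Continuous (glue N τ g) := by
  unfold glue
  fun_prop

lemma differentiable_glue {g : ℕ → ℝ → ℂ → ℂ} (hg : ∀ n t, Differentiable ℂ (g n t)) (N : ℕ)
    (τ : ℕ → ℝ) (t : ℝ) : Differentiable ℂ (glue N τ g t) :=
  (hg 0 t).add <| .sum fun n _ => (hg (n + 1) _).sub (hg n _)

end Glue

section Waves

open Polynomial ComplexConjugate

lemma two_mul_Lv (d : ℕ) : 2 * Lv d = rv d * d := by
  rw [Lv, rv]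
  split_ifs with h
  · obtain ⟨k, rfl⟩ := h
    push_cast
    omega
  · rfl

lemma rv_pos (d : ℕ) : 0 < rv d := by
  rw [rv]
  split_ifs <;> norm_num

/-- The frequency `L - r j` of `E_𝒞`. -/
def frequency (d j : ℕ) : ℂ := ((Lv d - rv d * j : ℤ) : ℂ)

/-- The time `r n / 2` at which the Hamiltonian jumps from `H_n` to `H_{n+1}`. -/
def switchTime (d n : ℕ) : ℝ := rv d * n / 2

lemma monotone_switchTime (d : ℕ) : Monotone (switchTime d) := fun m n hmn => by
  have hr : (0 : ℝ) ≤ rv d := by exact_mod_cast (rv_pos d).le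
  unfold switchTime
  gcongr

lemma switchTime_self (d : ℕ) : switchTime d d = Lv d := by
  have h : (2 * Lv d : ℝ) = rv d * d := by exact_mod_cast two_mul_Lv d
  rw [switchTime, ← h, mul_div_cancel_left₀ _ two_ne_zero]

lemma frequency_add_frequency {d n j : ℕ} (hn : n ≤ d) (hj : j ≤ d - n) :
    frequency d j + frequency d (d - n - j) = 2 * switchTime d n := by
  have h : (2 * Lv d : ℂ) = rv d * d := by exact_mod_cast two_mul_Lv d
  simp only [frequency, switchTime]
  push_cast [Nat.cast_sub hj, Nat.cast_sub hn]
  linear_combination h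

/-- The exponential sum with the coefficients of the `n`-th Schur iterate of `f`, scaled by `γ n`.
For suitable `γ` it is a component of the solution while the Hamiltonian is `H_n`. -/
def wave (p q γ : ℕ → ℂ) (d : ℕ) (f : ℂ[X]) (n : ℕ) : ℝ → ℂ → ℂ :=
  realExpSum (frequency d) (d - n) fun j => γ n * (schurSeq p q d f n).coeff j

variable {p q γ : ℕ → ℂ} {d : ℕ} {f : ℂ[X]}

/-- At a switching time the frequencies of a wave are symmetric, and at `z = 0` they do not matter:
in both cases only the sums of opposite coefficients enter, which the Schur step preserves. -/
lemma wave_succ {n : ℕ} (hn : n < d)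
    (hγ : γ n = p n * γ (n + 1) + q n * conj (γ (n + 1)))
    (htop : (schurSeq p q d f (n + 1)).coeff (d - n) = 0) {t : ℝ} {z : ℂ}
    (h : t = switchTime d n ∨ z = 0) :
    wave p q γ d f n t z = wave p q γ d f (n + 1) t z := by
  have hsymm : ∀ j ≤ d - n,
      (frequency d j + frequency d (d - n - j)) * z = 2 * t * z := fun j hj => by
    rcases h with rfl | rfl
    · rw [frequency_add_frequency hn.le hj]
    · simp
  have hdn : d - n = d - (n + 1) + 1 := by omega
  have hextend : wave p q γ d f (n + 1) t z = realExpSum (frequency d) (d - n)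
      (fun j => γ (n + 1) * (schurSeq p q d f (n + 1)).coeff j) t z := by
    rw [hdn, realExpSum_succ_of_top_eq_zero (by rw [← hdn, htop, mul_zero]), wave]
  rw [hextend, wave, realExpSum_eq_of_symm hsymm, realExpSum_eq_of_symm hsymm]
  congr 1
  refine Finset.sum_congr rfl fun j hj => ?_
  have hjn := Finset.mem_range_succ_iff.mp hj
  rw [coeff_schurSeq_succ hjn, coeff_schurSeq_succ (Nat.sub_le _ _), Nat.sub_sub_self hjn, hγ]
  simp only [map_mul, map_add, conj_conj]
  ring

/-- The scaling factors `γ n` compensate the Schur recursion with reflection coefficients `p n` and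
`conj (q n)`, so that consecutive waves can be joined continuously. -/
def IsGauge (p q : ℕ → ℂ) (d : ℕ) (γ : ℕ → ℂ) : Prop :=
  ∀ n < d, γ n = p n * γ (n + 1) + q n * conj (γ (n + 1))

/-- The waves, concatenated at the switching times. -/
def gluedWave (p q γ : ℕ → ℂ) (d : ℕ) (f : ℂ[X]) : ℝ → ℂ → ℂ :=
  glue d (switchTime d) (wave p q γ d f)

variable (p q γ d f) in
lemma continuous_gluedWave (z : ℂ) : Continuous fun t => gluedWave p q γ d f t z :=
  continuous_pi_iff.mp (continuous_glue (fun _ => continuous_realExpSum _ _ _) _ _) z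

variable (p q γ d f) in
lemma differentiable_gluedWave (t : ℝ) : Differentiable ℂ (gluedWave p q γ d f t) :=
  differentiable_glue (fun _ => differentiable_realExpSum _ _ _) _ _ t

lemma hasDerivAt_wave {α β : ℕ → ℂ} {n : ℕ} {x y : ℝ} (h : -I * γ n = x * α n + y * β n) (t : ℝ)
    (z : ℂ) : HasDerivAt (fun s => wave p q γ d f n s z)
      (z * (x * wave p q α d f n t z + y * wave p q β d f n t z)) t := by
  refine (hasDerivAt_realExpSum _ _ _ t z).congr_deriv ?_
  rw [wave, wave, ← realExpSum_linear_combination]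
  simp only [← mul_assoc, h, add_mul]

lemma wave_switchTime (hγ : IsGauge p q d γ)
    (htop : ∀ n < d, (schurSeq p q d f (n + 1)).coeff (d - n) = 0) {n : ℕ} (hn : n < d) :
    wave p q γ d f n (switchTime d n) = wave p q γ d f (n + 1) (switchTime d n) :=
  funext fun _ => wave_succ hn (hγ n hn) (htop n hn) (.inl rfl)

lemma wave_apply_zero (hγ : IsGauge p q d γ)
    (htop : ∀ n < d, (schurSeq p q d f (n + 1)).coeff (d - n) = 0) {n : ℕ} (hn : n ≤ d)
    (t : ℝ) : wave p q γ d f n t 0 = wave p q γ d f 0 0 0 := by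
  induction n with
  | zero => exact realExpSum_apply_zero _ _ _ t
  | succ n ih => rw [← wave_succ hn (hγ n hn) (htop n hn) (.inr rfl), ih (by omega)]

lemma gluedWave_zero (hγ : IsGauge p q d γ)
    (htop : ∀ n < d, (schurSeq p q d f (n + 1)).coeff (d - n) = 0) :
    gluedWave p q γ d f 0 = wave p q γ d f 0 0 := by
  refine glue_eq (fun n => wave_switchTime hγ htop) d.zero_le
    (fun n hn => absurd hn n.not_lt_zero) fun n _ _ => ?_
  simpa [switchTime] using monotone_switchTime d n.zero_le

lemma gluedWave_eq_wave (hγ : IsGauge p q d γ)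
    (htop : ∀ n < d, (schurSeq p q d f (n + 1)).coeff (d - n) = 0) {n : ℕ} (hn₁ : 1 ≤ n)
    (hn : n ≤ d) {t : ℝ} (hlo : rv d * (n - 1) / 2 ≤ t) (hhi : t ≤ rv d * n / 2) :
    gluedWave p q γ d f t = wave p q γ d f n t := by
  refine glue_eq (fun n => wave_switchTime hγ htop) hn (fun k hk => ?_)
    fun k hk _ => hhi.trans (monotone_switchTime d hk)
  refine (monotone_switchTime d (Nat.le_sub_one_of_lt hk)).trans (le_of_eq_of_le ?_ hlo)
  rw [switchTime, Nat.cast_pred hn₁]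

/-- At `t = L` the only remaining frequency is zero, so the value there is independent of `z`; at
`z = 0` the waves are constant in `t` and all have the same value. -/
lemma tendsto_gluedWave (hγ : IsGauge p q d γ)
    (htop : ∀ n < d, (schurSeq p q d f (n + 1)).coeff (d - n) = 0) (z : ℂ) :
    Tendsto (fun t => gluedWave p q γ d f t z) (𝓝[<] (Lv d : ℝ)) (𝓝 (gluedWave p q γ d f 0 0)) := by
  have hend : gluedWave p q γ d f (Lv d) = wave p q γ d f d (Lv d) :=
    glue_eq (fun n => wave_switchTime hγ htop) le_rfl
      (fun n hn => switchTime_self d ▸ monotone_switchTime d hn.le)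
      fun n hn hnd => absurd hn hnd.not_ge
  have hconst : wave p q γ d f d (Lv d) z = wave p q γ d f d (Lv d) 0 := by
    simp [wave, realExpSum, frequency]
  rw [gluedWave_zero hγ htop, ← wave_apply_zero hγ htop le_rfl (Lv d), ← hconst, ← hend]
  exact ((continuous_gluedWave p q γ d f z).tendsto _).mono_left nhdsWithin_le_nhds

lemma hasDerivAt_gluedWave {α β : ℕ → ℂ} (hγ : IsGauge p q d γ)
    (htop : ∀ n < d, (schurSeq p q d f (n + 1)).coeff (d - n) = 0) (hα : IsGauge p q d α)
    (hβ : IsGauge p q d β) {n : ℕ} (hn₁ : 1 ≤ n) (hn : n ≤ d) {x y : ℝ}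
    (h : -I * γ n = x * α n + y * β n) {t : ℝ}
    (ht : t ∈ Set.Ioo ((rv d : ℝ) * (n - 1) / 2) (rv d * n / 2)) (z : ℂ) :
    HasDerivAt (fun s => gluedWave p q γ d f s z)
      (z * (x * gluedWave p q α d f t z + y * gluedWave p q β d f t z)) t := by
  rw [gluedWave_eq_wave hα htop hn₁ hn ht.1.le ht.2.le,
    gluedWave_eq_wave hβ htop hn₁ hn ht.1.le ht.2.le]
  refine (hasDerivAt_wave h t z).congr_of_eventuallyEq ?_
  filter_upwards [isOpen_Ioo.mem_nhds ht] with s hs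
  rw [gluedWave_eq_wave hγ htop hn₁ hn hs.1.le hs.2.le]

lemma sharp_Ecal (d : ℕ) (C : ℤ → ℂ) (z : ℂ) :
    sharp (Ecal d C) z = ∑ j ∈ Finset.range (d + 1),
      conj (coeffC d C j) * exp (-(I * frequency d j * z)) := by
  simp [sharp, Ecal, coeffC, frequency, ← exp_conj]

lemma gluedWave_zero_symbolPoly {C : ℤ → ℂ} (hγ : IsGauge p q d γ)
    (htop : ∀ n < d, (schurSeq p q d (symbolPoly d C) (n + 1)).coeff (d - n) = 0) (z : ℂ) :
    gluedWave p q γ d (symbolPoly d C) 0 z =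
      (γ 0 * Ecal d C z + conj (γ 0) * sharp (Ecal d C) z) / 2 := by
  rw [gluedWave_zero hγ htop, sharp_Ecal, Ecal, wave, realExpSum, Finset.mul_sum, Finset.mul_sum,
    Finset.mul_sum, ← Finset.sum_add_distrib, Finset.sum_div]
  refine Finset.sum_congr rfl fun j hj => ?_
  rw [schurSeq, coeff_symbolPoly (Finset.mem_range_succ_iff.mp hj), ofReal_zero, sub_zero, map_mul]
  simp only [coeffC, frequency]
  ring

end Waves

section Gauge

open ComplexConjugate

/-- The `i`-th row of `(R_n ⋯ R_1)⁻¹`, as the sequence of scaling factors for the waves making up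
`A` (`i = 0`) or `B` (`i = 1`). -/
def rowGauge (zp zm : ℕ → ℕ → ℂ) (i : Fin 2) (n : ℕ) : ℂ := rowComplex (Rprod zp zm n)⁻¹ i

lemma isGauge_rowGauge {d : ℕ} {zp zm : ℕ → ℕ → ℂ}
    (h : ∀ n < d, normSq (reflectionSum zp zm n) ≠ normSq (reflectionDiff zp zm n)) (i : Fin 2) :
    IsGauge (reflectionSum zp zm) (reflectionDiff zp zm) d (rowGauge zp zm i) :=
  fun n hn => rowComplex_inv_Rprod (h n hn) i

lemma rowGauge_zero_zero (zp zm : ℕ → ℕ → ℂ) : rowGauge zp zm 0 0 = 1 := by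
  apply Complex.ext <;> simp [rowGauge, rowComplex, Rprod]

lemma rowGauge_one_zero (zp zm : ℕ → ℕ → ℂ) : rowGauge zp zm 1 0 = I := by
  apply Complex.ext <;> simp [rowGauge, rowComplex, Rprod]

end Gauge

/-- Theorem 1: the inverse problem for the quasi-canonical system attached to `E_𝒞`. -/
theorem quasiCanonical_inverse_problem
    (d : ℕ) (hd : 0 < d) (C : ℤ → ℂ) (hC : C (Lv d) * C (-(Lv d)) ≠ 0)
    (hD : ∀ n, 1 ≤ n → n ≤ d → SCD d C n ≠ 0)
    (zp zm : ℕ → ℕ → ℂ)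
    (hzp : ∀ n, 1 ≤ n → n ≤ d →
      (SCL (coeffC d C) d n 1).mulVec (symVec n (zp n)) = -(rhsVec d n C))
    (hzm : ∀ n, 1 ≤ n → n ≤ d →
      (SCL (coeffC d C) d n (-1)).mulVec (symVec n (zm n)) = rhsVec d n C) :
    ∃ A B : ℝ → ℂ → ℂ, ∃ a b : ℕ → ℕ → ℂ,
      -- continuity in t and analyticity in z
      (∀ z : ℂ, ContinuousOn (fun t => A t z) (Set.Ico (0 : ℝ) ((Lv d : ℝ)))) ∧
      (∀ z : ℂ, ContinuousOn (fun t => B t z) (Set.Ico (0 : ℝ) ((Lv d : ℝ)))) ∧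
      (∀ t ∈ Set.Ico (0 : ℝ) ((Lv d : ℝ)), Differentiable ℂ (A t) ∧ Differentiable ℂ (B t)) ∧
      -- (i) the explicit exponential-polynomial form on each subinterval
      (∀ n, 1 ≤ n → n ≤ d → ∀ t : ℝ,
        (rv d : ℝ) * ((n : ℝ) - 1) / 2 ≤ t → t < (rv d : ℝ) * (n : ℝ) / 2 → ∀ z : ℂ,
        A t z = (1 / 2) * ∑ j ∈ Finset.range (d - n + 1),
          (a n j * Complex.exp (Complex.I * (((Lv d - rv d * j : ℤ) : ℂ) - (t : ℂ)) * z)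
            + (starRingEnd ℂ) (a n j) *
              Complex.exp (-(Complex.I * (((Lv d - rv d * j : ℤ) : ℂ) - (t : ℂ)) * z))) ∧
        B t z = (1 / 2) * ∑ j ∈ Finset.range (d - n + 1),
          (b n j * Complex.exp (Complex.I * (((Lv d - rv d * j : ℤ) : ℂ) - (t : ℂ)) * z)
            + (starRingEnd ℂ) (b n j) *
              Complex.exp (-(Complex.I * (((Lv d - rv d * j : ℤ) : ℂ) - (t : ℂ)) * z)))) ∧
      -- (ii) the quasi-canonical system with Hamiltonian H(t) = H_n(𝒞) on each open subinterval
      (∀ n, 1 ≤ n → n ≤ d → ∀ t : ℝ,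
        t ∈ Set.Ioo ((rv d : ℝ) * ((n : ℝ) - 1) / 2) ((rv d : ℝ) * (n : ℝ) / 2) → ∀ z : ℂ,
        HasDerivAt (fun s => A s z)
          (z * ((Hmat zp zm n 1 0 : ℝ) * A t z + (Hmat zp zm n 1 1 : ℝ) * B t z)) t ∧
        HasDerivAt (fun s => B s z)
          (-(z * ((Hmat zp zm n 0 0 : ℝ) * A t z + (Hmat zp zm n 0 1 : ℝ) * B t z))) t) ∧
      -- (iii) the boundary condition at t = 0
      (∀ z : ℂ, A 0 z = (Ecal d C z + sharp (Ecal d C) z) / 2 ∧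
        B 0 z = Complex.I / 2 * (Ecal d C z - sharp (Ecal d C) z)) ∧
      -- (iv) the boundary condition at t = L: the limit is independent of z
      (∀ z : ℂ, Tendsto (fun t => (A t z, B t z))
        (nhdsWithin ((Lv d : ℝ)) (Set.Iio ((Lv d : ℝ)))) (nhds (A 0 0, B 0 0))) := by
  have hCL := left_ne_zero_of_mul hC
  have hne n (hn : n < d) := normSq_reflectionSum_ne hCL hD hzp hzm hn
  have htop n (hn : n < d) := coeff_schurSeq_succ_top hCL hD hzp hzm hn
  have hdet n (hn : n ≤ d) := det_Rprod_ne_zero fun k hk => hne k (hk.trans_le hn)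
  have hγ i := isGauge_rowGauge hne i
  let S := schurSeq (reflectionSum zp zm) (reflectionDiff zp zm) d (symbolPoly d C)
  let Y i := gluedWave (reflectionSum zp zm) (reflectionDiff zp zm) (rowGauge zp zm i) d
    (symbolPoly d C)
  have hcont i z : Continuous fun t => Y i t z := continuous_gluedWave _ _ _ _ _ z
  have hdiff i t : Differentiable ℂ (Y i t) := differentiable_gluedWave _ _ _ _ _ t
  refine ⟨Y 0, Y 1, fun n j => rowGauge zp zm 0 n * (S n).coeff j,
    fun n j => rowGauge zp zm 1 n * (S n).coeff j, fun z => (hcont 0 z).continuousOn,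
    fun z => (hcont 1 z).continuousOn, fun t _ => ⟨hdiff 0 t, hdiff 1 t⟩,
    fun n hn₁ hn t hlo hhi z => ?_, fun n hn₁ hn t ht z => ?_, fun z => ?_,
    fun z => (tendsto_gluedWave (hγ 0) htop z).prodMk_nhds (tendsto_gluedWave (hγ 1) htop z)⟩
  · have hform i := congrFun (gluedWave_eq_wave (hγ i) htop hn₁ hn hlo hhi.le) z
    exact ⟨hform 0, hform 1⟩
  · have hderiv i {x y} h :=
      hasDerivAt_gluedWave (x := x) (y := y) (hγ i) htop (hγ 0) (hγ 1) hn₁ hn h ht z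
    exact ⟨hderiv 0 (Hmat_one_rowComplex (hdet n hn)),
      (hderiv 1 (Hmat_zero_rowComplex (hdet n hn))).congr_deriv (by push_cast; ring)⟩
  · simp only [Y, gluedWave_zero_symbolPoly (hγ _) htop, rowGauge_zero_zero, rowGauge_one_zero,
      map_one, conj_I]
    constructor <;> ring

end
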